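/- With the notation of the concrete construction (Ω = ZMod 8 × ZMod k × ZMod r with k odd and r ∈ {1,3}): the subgroup R₁ = ⟨τ₁,ρ₁,ρ₂⟩ of Sym(Ω) acts regularly on Ω, i.e., for all ω, ω' ∈ Ω there is exactly one element of R₁ mapping ω to ω'. -/

import Mathlib

open Equiv

instance : DecidablePred (Even : ZMod 8 → Prop) := fun i =>
  decidable_of_iff (∃ x : ZMod 8, i = x + x) Iff.rfl

/-- The permutation of `ZMod 8` given by the 8-cycle (0 1 2 3 4 5 6 7). -/
def sigma1 : Equiv.Perm (ZMod 8) := Equiv.addRight (1 : ZMod 8)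

/-- The permutation of `ZMod 8` given by the 8-cycle (0 1 6 7 4 5 2 3). -/
def sigma2 : Equiv.Perm (ZMod 8) where
  toFun i := if Even i then i + 1 else i + 5
  invFun i := if Even i then i + 3 else i - 1
  left_inv := by decide
  right_inv := by decide

def tau1 (k r : ℕ) : Equiv.Perm (ZMod 8 × ZMod k × ZMod r) :=
  sigma1.prodCongr (Equiv.refl _)

def tau2 (k r : ℕ) : Equiv.Perm (ZMod 8 × ZMod k × ZMod r) :=
  sigma2.prodCongr (Equiv.refl _)

def rho1 (k r : ℕ) : Equiv.Perm (ZMod 8 × ZMod k × ZMod r) where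
  toFun x := if Even x.1 then (x.1, x.2.1 + 1, x.2.2) else (x.1, x.2.1 - 1, x.2.2)
  invFun x := if Even x.1 then (x.1, x.2.1 - 1, x.2.2) else (x.1, x.2.1 + 1, x.2.2)
  left_inv := by rintro ⟨i, j, l⟩; by_cases h : Even i <;> simp [h]
  right_inv := by rintro ⟨i, j, l⟩; by_cases h : Even i <;> simp [h]

def rho2 (k r : ℕ) : Equiv.Perm (ZMod 8 × ZMod k × ZMod r) where
  toFun x := if Even x.1 then (x.1, x.2.1, x.2.2 + 1) else (x.1, x.2.1, x.2.2 - 1)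
  invFun x := if Even x.1 then (x.1, x.2.1, x.2.2 - 1) else (x.1, x.2.1, x.2.2 + 1)
  left_inv := by rintro ⟨i, j, l⟩; by_cases h : Even i <;> simp [h]
  right_inv := by rintro ⟨i, j, l⟩; by_cases h : Even i <;> simp [h]

/-- The permutation of `ZMod 8 × ZMod k × ZMod r` acting on the first coordinate as the
product of transpositions (1 5)(3 7) and fixing the other coordinates. -/
def hperm (k r : ℕ) : Equiv.Perm (ZMod 8 × ZMod k × ZMod r) :=
  ((Equiv.swap (1 : ZMod 8) 5).trans (Equiv.swap (3 : ZMod 8) 7)).prodCongr (Equiv.refl _)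

def R1 (k r : ℕ) : Subgroup (Equiv.Perm (ZMod 8 × ZMod k × ZMod r)) :=
  Subgroup.closure {tau1 k r, rho1 k r, rho2 k r}

def R2 (k r : ℕ) : Subgroup (Equiv.Perm (ZMod 8 × ZMod k × ZMod r)) :=
  Subgroup.closure {tau2 k r, rho1 k r, rho2 k r}

def Ggrp (k r : ℕ) : Subgroup (Equiv.Perm (ZMod 8 × ZMod k × ZMod r)) :=
  R1 k r ⊔ R2 k r

def Hgrp (k r : ℕ) : Subgroup (Equiv.Perm (ZMod 8 × ZMod k × ZMod r)) :=
  Subgroup.closure {tau1 k r, tau2 k r}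

/-! `Ω` is the underlying set of a semidirect product `(ZMod k × ZMod r) ⋊ ZMod 8`, in which
`i : ZMod 8` acts as `(-1) ^ i`, and `τ₁`, `ρ₁`, `ρ₂` are the right multiplications by
`(1, 0, 0)`, `(0, 1, 0)`, `(0, 0, 1)`. These generate the group of all right multiplications, which
is transitive and commutes with the left multiplications. If two elements of `R₁` agree at `ω`, they
agree at the image of `ω` under every left multiplication, hence everywhere. -/

theorem eq_of_smul_eq_of_isPretransitive_smulCommClass (N : Type*) {M α : Type*}
    [SMul M α] [FaithfulSMul M α] [SMul N α] [SMulCommClass N M α] [MulAction.IsPretransitive N α]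
    {m₁ m₂ : M} {a : α} (h : m₁ • a = m₂ • a) : m₁ = m₂ := by
  refine FaithfulSMul.eq_of_smul_eq_smul (α := α) fun x => ?_
  obtain ⟨n, rfl⟩ := MulAction.exists_smul_eq N a x
  rw [← smul_comm, h, smul_comm]

theorem existsUnique_mem_apply_eq_of_isPretransitive_centralizer {α : Type*}
    (G : Subgroup (Perm α)) [MulAction.IsPretransitive G α]
    [MulAction.IsPretransitive (Subgroup.centralizer (G : Set (Perm α))) α] (a b : α) :
    ∃! g, g ∈ G ∧ g a = b := by
  have : SMulCommClass (Subgroup.centralizer (G : Set (Perm α))) G α := ⟨fun c g x =>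
    (DFunLike.congr_fun (Subgroup.mem_centralizer_iff.1 c.2 g g.2) x).symm⟩
  obtain ⟨g, hg⟩ := MulAction.exists_smul_eq G a b
  refine ⟨g, ⟨g.2, hg⟩, fun h ⟨hh, ha⟩ => ?_⟩
  exact congrArg Subtype.val <| eq_of_smul_eq_of_isPretransitive_smulCommClass
    (Subgroup.centralizer (G : Set (Perm α))) (m₁ := ⟨h, hh⟩) (ha.trans hg.symm)

section SemidirectTranslation

variable {I V Γ : Type*} [AddCommGroup I]

variable (V) in
/-- Right multiplication by `(a, 0)` in the semidirect product of `I` and `V`, whose elements are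
written as pairs in `I × V` with product `(i, x) * (a, v) = (i + a, x + i • v)`. It does not depend
on the action of `I` on `V`. -/
def baseTranslation : Multiplicative I →* Perm (I × V) where
  toFun a := (Equiv.addRight a.toAdd).prodCongr (Equiv.refl V)
  map_one' := by ext <;> simp
  map_mul' a b := by ext <;> simp [add_comm a.toAdd, add_assoc]

@[simp]
theorem baseTranslation_apply (a : Multiplicative I) (x : I × V) :
    baseTranslation V a x = (x.1 + a.toAdd, x.2) := rfl

variable [AddCommGroup V] [Group Γ] [DistribMulAction Γ V] (χ : AddChar I Γ)

/-- Right multiplication by `(0, v)` in the semidirect product of `I` and `V` in which `I` acts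
on `V` through `χ`, that is, `(i, x) * (a, v) = (i + a, x + χ i • v)`. -/
def fiberTranslation : Multiplicative V →* Perm (I × V) where
  toFun v := Equiv.prodShear (Equiv.refl I) fun i => Equiv.addRight (χ i • v.toAdd)
  map_one' := by ext <;> simp
  map_mul' v w := by ext <;> simp [add_comm v.toAdd, add_assoc]

/-- Left multiplication by `p` in the semidirect product of `I` and `V` in which `I` acts
on `V` through `χ`. -/
def leftTranslation (p : I × V) : Perm (I × V) :=
  (Equiv.addLeft p.1).prodCongr ((MulAction.toPerm (χ p.1)).trans (Equiv.addLeft p.2))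

variable (V) in
/-- The group of right multiplications of the semidirect product of `I` and `V` in which `I` acts
on `V` through `χ`. -/
def rightTranslationGroup : Subgroup (Perm (I × V)) :=
  (baseTranslation V).range ⊔ (fiberTranslation χ).range

@[simp]
theorem fiberTranslation_apply (v : Multiplicative V) (x : I × V) :
    fiberTranslation χ v x = (x.1, x.2 + χ x.1 • v.toAdd) := rfl

@[simp]
theorem leftTranslation_apply (p x : I × V) :
    leftTranslation χ p x = (p.1 + x.1, p.2 + χ p.1 • x.2) := rfl

theorem baseTranslation_mem_rightTranslationGroup (a : Multiplicative I) :
    baseTranslation V a ∈ rightTranslationGroup V χ :=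
  Subgroup.mem_sup_left ⟨a, rfl⟩

theorem fiberTranslation_mem_rightTranslationGroup (v : Multiplicative V) :
    fiberTranslation χ v ∈ rightTranslationGroup V χ :=
  Subgroup.mem_sup_right ⟨v, rfl⟩

theorem commute_leftTranslation_baseTranslation (p : I × V) (a : Multiplicative I) :
    Commute (leftTranslation χ p) (baseTranslation V a) := by
  ext x <;> simp [add_assoc]

theorem commute_leftTranslation_fiberTranslation (p : I × V) (v : Multiplicative V) :
    Commute (leftTranslation χ p) (fiberTranslation χ v) := by
  ext x <;> simp [add_assoc, AddChar.map_add_eq_mul, mul_smul]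

theorem leftTranslation_mem_centralizer (p : I × V) :
    leftTranslation χ p ∈
      Subgroup.centralizer (rightTranslationGroup V χ : Set (Perm (I × V))) := by
  have base_le : (baseTranslation V).range ≤ Subgroup.centralizer {leftTranslation χ p} := by
    rintro _ ⟨a, rfl⟩
    exact Subgroup.mem_centralizer_singleton_iff.2
      (commute_leftTranslation_baseTranslation χ p a).symm
  have fiber_le : (fiberTranslation χ).range ≤ Subgroup.centralizer {leftTranslation χ p} := by
    rintro _ ⟨v, rfl⟩
    exact Subgroup.mem_centralizer_singleton_iff.2
      (commute_leftTranslation_fiberTranslation χ p v).symm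
  exact fun g hg => Subgroup.mem_centralizer_singleton_iff.1 (sup_le base_le fiber_le hg)

instance isPretransitive_rightTranslationGroup :
    MulAction.IsPretransitive (rightTranslationGroup V χ) (I × V) := by
  refine ⟨fun x y => ⟨⟨fiberTranslation χ (.ofAdd ((χ y.1)⁻¹ • (y.2 - x.2))) *
    baseTranslation V (.ofAdd (y.1 - x.1)),
    mul_mem (fiberTranslation_mem_rightTranslationGroup χ _)
      (baseTranslation_mem_rightTranslationGroup χ _)⟩, ?_⟩⟩
  ext <;> simp [Subgroup.smul_def, -ofAdd_sub]

instance isPretransitive_centralizer_rightTranslationGroup :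
    MulAction.IsPretransitive
      (Subgroup.centralizer (rightTranslationGroup V χ : Set (Perm (I × V)))) (I × V) := by
  refine ⟨fun x y => ⟨⟨leftTranslation χ (y.1 - x.1, y.2 - χ (y.1 - x.1) • x.2),
    leftTranslation_mem_centralizer χ _⟩, ?_⟩⟩
  ext <;> simp [Subgroup.smul_def]

end SemidirectTranslation

/-- The character `i ↦ (-1) ^ i` of `ZMod 8`, through which `ZMod 8` acts on
`ZMod k × ZMod r`. -/
def paritySign : AddChar (ZMod 8) ℤˣ where
  toFun i := if Even i then 1 else -1
  map_zero_eq_one' := by decide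
  map_add_eq_mul' := by decide

theorem paritySign_apply (i : ZMod 8) : paritySign i = if Even i then 1 else -1 := rfl

theorem tau1_eq_baseTranslation (k r : ℕ) :
    tau1 k r = baseTranslation (ZMod k × ZMod r) (.ofAdd 1) := rfl

theorem rho1_eq_fiberTranslation (k r : ℕ) :
    rho1 k r = fiberTranslation paritySign (.ofAdd (1, 0)) := by
  ext1 x
  by_cases h : Even x.1 <;> simp [rho1, paritySign_apply, h, sub_eq_add_neg, Prod.add_def]

theorem rho2_eq_fiberTranslation (k r : ℕ) :
    rho2 k r = fiberTranslation paritySign (.ofAdd (0, 1)) := by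
  ext1 x
  by_cases h : Even x.1 <;> simp [rho2, paritySign_apply, h, sub_eq_add_neg, Prod.add_def]

theorem baseTranslation_intCast (k r : ℕ) (n : ℤ) :
    baseTranslation (ZMod k × ZMod r) (.ofAdd (n : ZMod 8)) = tau1 k r ^ n := by
  rw [tau1_eq_baseTranslation, ← map_zpow, ← ofAdd_zsmul, zsmul_one]

theorem fiberTranslation_intCast (k r : ℕ) (m n : ℤ) :
    fiberTranslation paritySign (.ofAdd ((m : ZMod k), (n : ZMod r))) =
      rho1 k r ^ m * rho2 k r ^ n := by
  have basis_expansion : Multiplicative.ofAdd ((m : ZMod k), (n : ZMod r)) =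
      .ofAdd (1, 0) ^ m * .ofAdd (0, 1) ^ n := by
    simp [← ofAdd_zsmul, ← ofAdd_add]
  rw [basis_expansion, map_mul, map_zpow, map_zpow, rho1_eq_fiberTranslation,
    rho2_eq_fiberTranslation]

theorem R1_eq_rightTranslationGroup (k r : ℕ) :
    R1 k r = rightTranslationGroup (ZMod k × ZMod r) paritySign := by
  have tau1_mem : tau1 k r ∈ R1 k r := Subgroup.subset_closure (by simp)
  have rho1_mem : rho1 k r ∈ R1 k r := Subgroup.subset_closure (by simp)
  have rho2_mem : rho2 k r ∈ R1 k r := Subgroup.subset_closure (by simp)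
  refine le_antisymm ((Subgroup.closure_le _).2 ?_) (sup_le ?_ ?_)
  · rintro _ (rfl | rfl | rfl)
    · exact tau1_eq_baseTranslation k r ▸ baseTranslation_mem_rightTranslationGroup paritySign _
    · exact rho1_eq_fiberTranslation k r ▸ fiberTranslation_mem_rightTranslationGroup paritySign _
    · exact rho2_eq_fiberTranslation k r ▸ fiberTranslation_mem_rightTranslationGroup paritySign _
  · rintro _ ⟨a, rfl⟩
    obtain ⟨n, hn⟩ := ZMod.intCast_surjective a.toAdd
    rw [← ofAdd_toAdd a, ← hn, baseTranslation_intCast]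
    exact zpow_mem tau1_mem n
  · rintro _ ⟨v, rfl⟩
    obtain ⟨m, hm⟩ := ZMod.intCast_surjective v.toAdd.1
    obtain ⟨n, hn⟩ := ZMod.intCast_surjective v.toAdd.2
    rw [← ofAdd_toAdd v, ← Prod.mk.eta (p := v.toAdd), ← hm, ← hn, fiberTranslation_intCast]
    exact mul_mem (zpow_mem rho1_mem m) (zpow_mem rho2_mem n)

theorem R1_regular_general (k r : ℕ) (ω ω' : ZMod 8 × ZMod k × ZMod r) :
    ∃! g : Perm (ZMod 8 × ZMod k × ZMod r), g ∈ R1 k r ∧ g ω = ω' := by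
  rw [R1_eq_rightTranslationGroup]
  exact existsUnique_mem_apply_eq_of_isPretransitive_centralizer _ ω ω'

/-- `R₁ = ⟨τ₁, ρ₁, ρ₂⟩` acts regularly on `Ω`: for all `ω, ω' ∈ Ω` there is exactly one
element of `R₁` mapping `ω` to `ω'`. -/
theorem R1_regular (k r : ℕ) (hk0 : 0 < k) (hk : Odd k) (hr : r = 1 ∨ r = 3) :
    ∀ ω ω' : ZMod 8 × ZMod k × ZMod r,
      ∃! g : Equiv.Perm (ZMod 8 × ZMod k × ZMod r), g ∈ R1 k r ∧ g ω = ω' :=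
  R1_regular_general k r
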